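/- Suppose Algorithm 1 is run on an on-line P_9-free bipartite graph G and a vertex v receives color a_k with k ≥ 2. Then C_k[v] contains an induced copy of X_{⌊√(k/2)⌋} such that the root of the copy lies on the same side of G as v. -/

import Mathlib

/-! ### P_n-free graphs -/

/-- `f` lists the vertices of an induced path on `n` vertices in `G`. -/
def IsInducedPath {V : Type*} (G : SimpleGraph V) (n : ℕ) (f : Fin n → V) : Prop :=
  Function.Injective f ∧
    ∀ a b : Fin n, G.Adj (f a) (f b) ↔ (a.val + 1 = b.val ∨ b.val + 1 = a.val)

/-- `G` contains no induced path on `n` vertices. -/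
def PFree {V : Type*} (G : SimpleGraph V) (n : ℕ) : Prop :=
  ¬ ∃ f : Fin n → V, IsInducedPath G n f

/-! ### The graphs `X_k` -/

/-- Vertex set of the graph `X_k` (with a junk value at `k = 0`). -/
def XV : ℕ → Type
  | 0 => PUnit
  | 1 => PUnit
  | 2 => Bool
  | (n+3) => Option (XV (n+2) ⊕ XV (n+2))

/-- The root of `X_k`. -/
def XRoot : (k : ℕ) → XV k
  | 0 => PUnit.unit
  | 1 => PUnit.unit
  | 2 => true
  | (_+3) => none

/-- The side of a vertex of `X_k`: `true` is the root side, `false` the non-root side. -/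
def XSide : (k : ℕ) → XV k → Bool
  | 0, _ => true
  | 1, _ => true
  | 2, v => v
  | (_+3), none => true
  | (n+3), some (Sum.inl x) => !(XSide (n+2) x)
  | (n+3), some (Sum.inr x) => XSide (n+2) x

/-- Base adjacency relation of `X_k`:  for `k ≥ 3`, `X_k` consists of two disjoint copies of
`X_{k-1}` with no edges in between, together with a root vertex joined to the root side of the
first copy and to the non-root side of the second copy. -/
def XRel : (k : ℕ) → XV k → XV k → Prop
  | 0, _, _ => False
  | 1, _, _ => False
  | 2, u, v => u ≠ v
  | (n+3), none, some (Sum.inl x) => XSide (n+2) x = true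
  | (n+3), none, some (Sum.inr x) => XSide (n+2) x = false
  | (n+3), some (Sum.inl x), none => XSide (n+2) x = true
  | (n+3), some (Sum.inr x), none => XSide (n+2) x = false
  | (n+3), some (Sum.inl x), some (Sum.inl y) => XRel (n+2) x y
  | (n+3), some (Sum.inr x), some (Sum.inr y) => XRel (n+2) x y
  | (_+3), _, _ => False

/-- The graph `X_k`. -/
def XGraph (k : ℕ) : SimpleGraph (XV k) := SimpleGraph.fromRel (XRel k)

/-! ### Algorithm 1 -/

/-- The three palettes of colors `a_i`, `b_i`, `c_i` used by Algorithm 1. -/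
inductive PalColor : Type
  | a : ℕ → PalColor
  | b : ℕ → PalColor
  | c : ℕ → PalColor
  deriving DecidableEq

/-- The index of a color. -/
def PalColor.index : PalColor → ℕ
  | a i => i
  | b i => i
  | c i => i

/-- A vertex `u` has color index `j` when its color is `a_j` or `b_j`. -/
def hasColorIndex (col : ℕ → PalColor) (u j : ℕ) : Prop :=
  col u = PalColor.a j ∨ col u = PalColor.b j

/-- Vertex set of `G_i[u]` at time `t` (vertices are presented in the order `0, 1, 2, …`):
the vertices presented before time `t` whose color has index between `1` and `i`,
together with `u`. -/
def domSet (col : ℕ → PalColor) (t i u : ℕ) : Set ℕ :=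
  {w | (w < t ∧ 1 ≤ (col w).index ∧ (col w).index ≤ i) ∨ w = u}

/-- `x` and `y` are connected within the subgraph of `G` induced on `S`. -/
def ReachIn (G : SimpleGraph ℕ) (S : Set ℕ) (x y : ℕ) : Prop :=
  ∃ (hx : x ∈ S) (hy : y ∈ S), (G.induce S).Reachable ⟨x, hx⟩ ⟨y, hy⟩

/-- `x` and `y` are joined by a walk of even length within the subgraph of `G` induced on `S`;
in a bipartite graph this says exactly that `x` and `y` are on the same side of their
(common) connected component. -/
def EvenReachIn (G : SimpleGraph ℕ) (S : Set ℕ) (x y : ℕ) : Prop :=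
  ∃ (hx : x ∈ S) (hy : y ∈ S) (p : (G.induce S).Walk ⟨x, hx⟩ ⟨y, hy⟩), Even p.length

/-- `C_i[u]` at time `t`: the connected component of `u` in the subgraph induced on
`domSet col t i u`. -/
def comp (G : SimpleGraph ℕ) (col : ℕ → PalColor) (t i u : ℕ) : Set ℕ :=
  {w | ReachIn G (domSet col t i u) u w}

/-- `C_i^y(u)` at time `t`: the connected component of `y` in `C_i(u) = C_i[u] \ {u}`. -/
def compMinus (G : SimpleGraph ℕ) (col : ℕ → PalColor) (t i u y : ℕ) : Set ℕ :=
  {w | ReachIn G (domSet col t i u \ {u}) y w}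

/-- Color `a_i` is mixed in `C_i[t]` at time `t`: vertices on both sides of `C_i[t]`
have color `a_i`. -/
def MixedA (G : SimpleGraph ℕ) (col : ℕ → PalColor) (t i : ℕ) : Prop :=
  ∃ x ∈ comp G col t i t, ∃ y ∈ comp G col t i t,
    col x = PalColor.a i ∧ col y = PalColor.a i ∧
    ¬ EvenReachIn G (domSet col t i t) x y

/-- `m = max {i ≥ 1 | a_i is mixed in C_i[t]} + 1` (with `max ∅ = 0`). -/
noncomputable def mIdx (G : SimpleGraph ℕ) (col : ℕ → PalColor) (t : ℕ) : ℕ :=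
  sSup {i | 1 ≤ i ∧ MixedA G col t i} + 1

/-- `u'` is universal to `C_{j-1}[u]` (at time `t`): `u'` is adjacent to all vertices in one of
the two sides of `C_{j-1}[u]`. -/
def UnivTo (G : SimpleGraph ℕ) (col : ℕ → PalColor) (t j u u' : ℕ) : Prop :=
  (∀ x ∈ comp G col t (j-1) u, EvenReachIn G (domSet col t (j-1) u) u x → G.Adj u' x) ∨
  (∀ x ∈ comp G col t (j-1) u, ¬ EvenReachIn G (domSet col t (j-1) u) u x → G.Adj u' x)

open Classical in
/-- One step of Algorithm 1: the color given to the vertex presented at time `t`, assuming that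
`col` records the colors of the previously presented vertices `0, …, t-1`. -/
noncomputable def step (G : SimpleGraph ℕ) (col : ℕ → PalColor) (t : ℕ) : PalColor :=
  let m := mIdx G col t
  let S := domSet col t m t
  let C := comp G col t m t
  let I1 : Set ℕ := {x ∈ C | EvenReachIn G S t x}
  let I2 : Set ℕ := {x ∈ C | ¬ EvenReachIn G S t x}
  if ∃ u ∈ I2, col u = PalColor.a m then PalColor.b m
  else if ∃ u ∈ I2, col u = PalColor.c m then PalColor.a m
  else if ∃ u ∈ I1 ∪ I2, ∃ u' ∈ I2, ∃ j : ℕ, hasColorIndex col u j ∧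
      ((m : ℝ) - Real.sqrt (2 * m) + 2 ≤ (j : ℝ)) ∧ UnivTo G col t j u u'
    then PalColor.c m
  else PalColor.a m

/-- The colors of the first `k` presented vertices under Algorithm 1 (junk elsewhere). -/
noncomputable def algoColAux (G : SimpleGraph ℕ) : ℕ → ℕ → PalColor
  | 0 => fun _ => PalColor.a 0
  | (k+1) => fun w => if w = k then step G (algoColAux G k) k else algoColAux G k w

/-- `algoCol G v` is the color that Algorithm 1 assigns to vertex `v` when the on-line graph `G`
is presented in the vertex order `0, 1, 2, …`. -/
noncomputable def algoCol (G : SimpleGraph ℕ) (v : ℕ) : PalColor :=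
  algoColAux G (v + 1) v

/-- The on-line graph on `ℕ` obtained by presenting the vertices of `G` in the order given by
the enumeration `π` (vertices `≥ n` are isolated). -/
def toNatGraph {V : Type*} (G : SimpleGraph V) {n : ℕ} (π : Fin n ≃ V) : SimpleGraph ℕ :=
  SimpleGraph.fromRel (fun i j => ∃ (hi : i < n) (hj : j < n), G.Adj (π ⟨i, hi⟩) (π ⟨j, hj⟩))

section aux

lemma ri_mem_left {G : SimpleGraph ℕ} {S : Set ℕ} {x y : ℕ} (h : ReachIn G S x y) : x ∈ S := h.1

lemma ri_mem_right {G : SimpleGraph ℕ} {S : Set ℕ} {x y : ℕ} (h : ReachIn G S x y) : y ∈ S := h.2.1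

lemma ri_refl {G : SimpleGraph ℕ} {S : Set ℕ} {x : ℕ} (h : x ∈ S) : ReachIn G S x x :=
  ⟨h, h, SimpleGraph.Reachable.refl _⟩

lemma ri_symm {G : SimpleGraph ℕ} {S : Set ℕ} {x y : ℕ} (h : ReachIn G S x y) :
    ReachIn G S y x := by
  obtain ⟨hx, hy, h⟩ := h
  exact ⟨hy, hx, h.symm⟩

lemma ri_trans {G : SimpleGraph ℕ} {S : Set ℕ} {x y z : ℕ} (h : ReachIn G S x y)
    (h' : ReachIn G S y z) : ReachIn G S x z := by
  obtain ⟨hx, hy, h⟩ := h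
  obtain ⟨hy', hz, h'⟩ := h'
  exact ⟨hx, hz, h.trans h'⟩

lemma ri_adj {G : SimpleGraph ℕ} {S : Set ℕ} {x y : ℕ} (hx : x ∈ S) (hy : y ∈ S)
    (h : G.Adj x y) : ReachIn G S x y := by
  refine ⟨hx, hy, SimpleGraph.Adj.reachable ?_⟩
  simpa using h

lemma ri_ind {G : SimpleGraph ℕ} {S : Set ℕ} {x y : ℕ} {P : ℕ → Prop} (h : ReachIn G S x y)
    (h0 : P x)
    (hs : ∀ a b, ReachIn G S x a → b ∈ S → G.Adj a b → P a → P b) : P y := by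
  obtain ⟨hx, hy, ⟨p⟩⟩ := h
  have key : ∀ (a b : S) (p : (G.induce S).Walk a b), ReachIn G S x a → P a → P b := by
    intro a b p
    induction p with
    | nil => intro _ h; exact h
    | @cons u v w huv p ih =>
      intro h1 h2
      have huv' : G.Adj u v := by simpa using huv
      exact ih (ri_trans h1 (ri_adj u.2 v.2 huv')) (hs _ _ h1 v.2 huv' h2)
  exact key _ _ p (ri_refl hx) h0

lemma ri_mono {G : SimpleGraph ℕ} {S T : Set ℕ} {x y : ℕ} (hST : S ⊆ T) (h : ReachIn G S x y) :
    ReachIn G T x y := by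
  refine ri_ind (P := fun y => ReachIn G T x y) h (ri_refl (hST h.1)) ?_
  intro a b ha hb hab h'
  exact ri_trans h' (ri_adj (hST (ri_mem_right ha)) (hST hb) hab)

lemma even_iff {G : SimpleGraph ℕ} {side : ℕ → Bool} (hside : ∀ x y, G.Adj x y → side x ≠ side y)
    {S : Set ℕ} {x y : ℕ} (h : ReachIn G S x y) :
    EvenReachIn G S x y ↔ side x = side y := by
  let c : (G.induce S).Coloring Bool := SimpleGraph.Coloring.mk (fun z => side z.1) (by
    intro a b hab
    exact hside _ _ (by simpa using hab))
  have hc : ∀ z, c z = side z.1 := fun z => rfl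
  constructor
  · rintro ⟨hx, hy, p, hp⟩
    have := (c.even_length_iff_congr p).1 hp
    rw [hc, hc] at this
    exact Bool.eq_iff_iff.2 this
  · intro hs
    obtain ⟨hx, hy, ⟨p⟩⟩ := h
    refine ⟨hx, hy, p, (c.even_length_iff_congr p).2 ?_⟩
    rw [hc, hc]
    show side x = true ↔ side y = true
    rw [hs]

lemma ri_split {G : SimpleGraph ℕ} {D : Set ℕ} {u y : ℕ} (h : ReachIn G (insert u D) u y) :
    y = u ∨ ∃ f ∈ D, G.Adj u f ∧ ReachIn G D f y := by
  refine ri_ind (P := fun y => y = u ∨ ∃ f ∈ D, G.Adj u f ∧ ReachIn G D f y) h (Or.inl rfl) ?_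
  intro a b ha hb hab hP
  rcases hb with rfl | hb
  · exact Or.inl rfl
  rcases hP with rfl | ⟨f, hf, huf, hfa⟩
  · exact Or.inr ⟨b, hb, hab, ri_refl hb⟩
  · exact Or.inr ⟨f, hf, huf, ri_trans hfa (ri_adj (ri_mem_right hfa) hb hab)⟩

lemma ri_split2 {G : SimpleGraph ℕ} {D : Set ℕ} {u x y : ℕ} (h : ReachIn G (insert u D) x y) :
    ReachIn G D x y ∨ ReachIn G (insert u D) x u := by
  by_cases hxu : ReachIn G (insert u D) x u
  · exact Or.inr hxu
  left
  have hx : x ∈ D := by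
    rcases h.1 with rfl | h'
    · exact absurd (ri_refl h.1) hxu
    · exact h'
  refine ri_ind (P := fun y => ReachIn G D x y) h (ri_refl hx) ?_
  intro a b ha hb hab hP
  rcases hb with rfl | hb
  · exact absurd (ri_trans ha (ri_adj (ri_mem_right ha) (by simp) hab)) hxu
  · exact ri_trans hP (ri_adj (ri_mem_right hP) hb hab)

/-! algorithm facts -/

def Dm (G : SimpleGraph ℕ) (t i : ℕ) : Set ℕ :=
  {w | w < t ∧ 1 ≤ (algoCol G w).index ∧ (algoCol G w).index ≤ i}

lemma Dm_mono (G : SimpleGraph ℕ) {t t' i i' : ℕ} (ht : t ≤ t') (hi : i ≤ i') :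
    Dm G t i ⊆ Dm G t' i' := by
  rintro w ⟨h1, h2, h3⟩
  exact ⟨by omega, h2, by omega⟩

lemma aux_eq (G : SimpleGraph ℕ) (t w : ℕ) (h : w < t) : algoColAux G t w = algoCol G w := by
  induction t with
  | zero => omega
  | succ t ih =>
    by_cases hw : w = t
    · subst hw; rfl
    · rw [← ih (by omega)]
      simp [algoColAux, hw]

lemma aux_self (G : SimpleGraph ℕ) (t w : ℕ) (h : t ≤ w) : algoColAux G t w = PalColor.a 0 := by
  induction t with
  | zero => rfl
  | succ t ih =>
    have hw : w ≠ t := by omega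
    simp [algoColAux, hw, ih (by omega)]

lemma algo_step (G : SimpleGraph ℕ) (t : ℕ) : algoCol G t = step G (algoColAux G t) t := by
  simp [algoCol, algoColAux]

lemma dom_aux (G : SimpleGraph ℕ) (t i u : ℕ) :
    domSet (algoColAux G t) t i u = insert u (Dm G t i) := by
  ext w
  simp only [domSet, Dm, Set.mem_ofPred_eq, Set.mem_insert_iff]
  constructor
  · rintro (⟨h1, h2⟩ | h)
    · rw [aux_eq G t w h1] at h2; exact Or.inr ⟨h1, h2⟩
    · exact Or.inl h
  · rintro (h | ⟨h1, h2⟩)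
    · exact Or.inr h
    · rw [← aux_eq G t w h1] at h2; exact Or.inl ⟨h1, h2⟩

lemma dom_algo (G : SimpleGraph ℕ) (t i u : ℕ) :
    domSet (algoCol G) t i u = insert u (Dm G t i) := by
  ext w
  simp only [domSet, Dm, Set.mem_ofPred_eq, Set.mem_insert_iff]
  exact or_comm

lemma univ_aux (G : SimpleGraph ℕ) (t j u u' : ℕ) :
    UnivTo G (algoColAux G t) t j u u' ↔ UnivTo G (algoCol G) t j u u' := by
  simp only [UnivTo, comp, dom_aux, dom_algo]

lemma univ_iff {G : SimpleGraph ℕ} {side : ℕ → Bool}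
    (hside : ∀ x y, G.Adj x y → side x ≠ side y) (t j u u' : ℕ) :
    UnivTo G (algoCol G) t j u u' ↔ ∃ b : Bool, ∀ x, ReachIn G (insert u (Dm G t (j-1))) u x →
      side x = b → G.Adj u' x := by
  simp only [UnivTo, comp, dom_algo, Set.mem_ofPred_eq]
  constructor
  · rintro (h | h)
    · refine ⟨side u, fun x hx hb => h x hx ((even_iff hside hx).2 hb.symm)⟩
    · refine ⟨!side u, fun x hx hb => h x hx ?_⟩
      rw [even_iff hside hx]
      intro h; rw [h] at hb; simp at hb
  · rintro ⟨b, h⟩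
    by_cases hb : b = side u
    · left
      intro x hx he
      rw [even_iff hside hx] at he
      exact h x hx (by rw [hb, he])
    · right
      intro x hx he
      rw [even_iff hside hx] at he
      refine h x hx ?_
      revert hb he
      cases b <;> cases side u <;> cases side x <;> simp

lemma step_idx (G : SimpleGraph ℕ) (t : ℕ) :
    (algoCol G t).index = mIdx G (algoColAux G t) t := by
  rw [algo_step]
  simp only [step]
  split_ifs <;> rfl

lemma idx_pos (G : SimpleGraph ℕ) (t : ℕ) : 1 ≤ (algoCol G t).index := by
  rw [step_idx]; simp [mIdx]

lemma mixed_bdd (G : SimpleGraph ℕ) (t : ℕ) :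
    BddAbove {i | 1 ≤ i ∧ MixedA G (algoColAux G t) t i} := by
  refine ⟨∑ w ∈ Finset.range t, (algoCol G w).index, ?_⟩
  rintro i ⟨hi, x, hx, y, hy, hcx, hcy, -⟩
  have hxt : x < t := by
    by_contra hxt
    rw [aux_self G t x (by omega)] at hcx
    injection hcx; omega
  rw [aux_eq G t x hxt] at hcx
  have : i = (algoCol G x).index := by rw [hcx]; rfl
  rw [this]
  exact Finset.single_le_sum (f := fun w => (algoCol G w).index) (fun _ _ => Nat.zero_le _)
    (Finset.mem_range.2 hxt)

lemma not_mixed (G : SimpleGraph ℕ) (t i : ℕ) (hi : (algoCol G t).index ≤ i) :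
    ¬ MixedA G (algoColAux G t) t i := by
  intro h
  have h1 := idx_pos G t
  have := le_csSup (mixed_bdd G t) (show i ∈ {i | 1 ≤ i ∧ MixedA G (algoColAux G t) t i} from
    ⟨by omega, h⟩)
  rw [step_idx, mIdx] at hi
  omega

lemma is_mixed (G : SimpleGraph ℕ) (t j : ℕ) (hj : 2 ≤ j) (hi : (algoCol G t).index = j) :
    MixedA G (algoColAux G t) t (j-1) := by
  rw [step_idx, mIdx] at hi
  have hne : {i | 1 ≤ i ∧ MixedA G (algoColAux G t) t i}.Nonempty := by
    by_contra h
    rw [Set.not_nonempty_iff_eq_empty] at h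
    rw [h] at hi; simp at hi; omega
  have := Nat.sSup_mem hne (mixed_bdd G t)
  have e : sSup {i | 1 ≤ i ∧ MixedA G (algoColAux G t) t i} = j - 1 := by omega
  rw [e] at this
  exact this.2

lemma spec_a {G : SimpleGraph ℕ} {side : ℕ → Bool}
    (hside : ∀ x y, G.Adj x y → side x ≠ side y) (t k : ℕ) (h : algoCol G t = PalColor.a k) :
    (∀ u < t, ReachIn G (insert t (Dm G t k)) t u → side u ≠ side t →
      algoCol G u ≠ PalColor.a k) ∧
    ((∃ u < t, ReachIn G (insert t (Dm G t k)) t u ∧ side u ≠ side t ∧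
        algoCol G u = PalColor.c k) ∨
     (∀ u < t, ReachIn G (insert t (Dm G t k)) t u → ∀ p, ReachIn G (insert t (Dm G t k)) t p →
       side p ≠ side t → ∀ j : ℕ, hasColorIndex (algoCol G) u j →
       ((k : ℝ) - Real.sqrt (2 * k) + 2 ≤ (j : ℝ)) → ¬ UnivTo G (algoCol G) t j u p)) := by
  have hm : mIdx G (algoColAux G t) t = k := by rw [← step_idx, h]; rfl
  have h1 := idx_pos G t
  have hk : 1 ≤ k := by rw [h] at h1; exact h1
  rw [algo_step] at h
  unfold step at h
  dsimp only at h
  split_ifs at h with c1 c2 c3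
  · simp only [hm, comp, dom_aux, Set.mem_ofPred_eq] at c1 c2
    refine ⟨?_, Or.inl ?_⟩
    · intro u hu hr hs hc
      refine c1 ⟨u, ⟨hr, ?_⟩, by rw [aux_eq G t u hu]; exact hc⟩
      rw [even_iff hside hr]; exact hs.symm
    · obtain ⟨u, ⟨hr, he⟩, hc⟩ := c2
      have hut : u < t := by
        by_contra hxt
        rw [aux_self G t u (by omega)] at hc
        cases hc
      rw [even_iff hside hr] at he
      exact ⟨u, hut, hr, fun h => he h.symm, by rw [← aux_eq G t u hut]; exact hc⟩
  · simp only [hm, comp, dom_aux, univ_aux, Set.mem_ofPred_eq] at c1 c3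
    refine ⟨?_, Or.inr ?_⟩
    · intro u hu hr hs hc
      refine c1 ⟨u, ⟨hr, ?_⟩, by rw [aux_eq G t u hu]; exact hc⟩
      rw [even_iff hside hr]; exact hs.symm
    · intro u hu hr p hp hsp j hj hkj hU
      refine c3 ⟨u, ?_, p, ⟨hp, ?_⟩, j, ?_, hkj, hU⟩
      · by_cases he : EvenReachIn G (insert t (Dm G t k)) t u
        · exact Or.inl ⟨hr, he⟩
        · exact Or.inr ⟨hr, he⟩
      · rw [even_iff hside hp]; exact hsp.symm
      · simpa [hasColorIndex, aux_eq G t u hu] using hj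

lemma spec_c {G : SimpleGraph ℕ} {side : ℕ → Bool}
    (hside : ∀ x y, G.Adj x y → side x ≠ side y) (t k : ℕ) (h : algoCol G t = PalColor.c k) :
    ∃ u, ReachIn G (insert t (Dm G t k)) t u ∧ ∃ p, ReachIn G (insert t (Dm G t k)) t p ∧
       side p ≠ side t ∧ ∃ j : ℕ, (u < t ∧ hasColorIndex (algoCol G) u j ∨ j = 0) ∧
       ((k : ℝ) - Real.sqrt (2 * k) + 2 ≤ (j : ℝ)) ∧ UnivTo G (algoCol G) t j u p := by
  have hm : mIdx G (algoColAux G t) t = k := by rw [← step_idx, h]; rfl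
  rw [algo_step] at h
  unfold step at h
  dsimp only at h
  split_ifs at h with c1 c2 c3
  simp only [hm, comp, dom_aux, univ_aux, Set.mem_ofPred_eq] at c3
  obtain ⟨u, hu, p, ⟨hp, hep⟩, j, hj, hkj, hU⟩ := c3
  have hr : ReachIn G (insert t (Dm G t k)) t u := by
    rcases hu with hu | hu <;> exact hu.1
  refine ⟨u, hr, p, hp, ?_, j, ?_, hkj, hU⟩
  · rw [even_iff hside hp] at hep; exact fun h => hep h.symm
  · by_cases hut : u < t
    · left
      refine ⟨hut, ?_⟩
      simpa [hasColorIndex, aux_eq G t u hut] using hj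
    · right
      rw [hasColorIndex, aux_self G t u (by omega)] at hj
      rcases hj with hj | hj
      · injection hj with hj; exact hj.symm
      · cases hj

lemma nonmix {G : SimpleGraph ℕ} {side : ℕ → Bool}
    (hside : ∀ x y, G.Adj x y → side x ≠ side y) (i : ℕ) (t : ℕ) : ∀ x y : ℕ,
    ReachIn G (Dm G t i) x y → algoCol G x = PalColor.a i → algoCol G y = PalColor.a i →
    side x = side y := by
  induction t with
  | zero => intro x y h; exact absurd h.1.1 (by omega)
  | succ t ih =>
    intro x y h hx hy
    by_cases hti : (algoCol G t).index ≤ i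
    · have hD : Dm G (t+1) i = insert t (Dm G t i) := by
        ext w
        simp only [Dm, Set.mem_ofPred_eq, Set.mem_insert_iff]
        constructor
        · rintro ⟨h1, h2⟩
          by_cases hw : w = t
          · exact Or.inl hw
          · exact Or.inr ⟨by omega, h2⟩
        · rintro (rfl | ⟨h1, h2⟩)
          · exact ⟨by omega, idx_pos G w, hti⟩
          · exact ⟨by omega, h2⟩
      rw [hD] at h
      rcases ri_split2 h with h' | h'
      · exact ih x y h' hx hy
      have hxr := ri_symm h'
      have hyr := ri_trans hxr h
      have key : ∀ y, ReachIn G (insert t (Dm G t i)) t y → algoCol G y = PalColor.a i →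
          algoCol G t = PalColor.a i → side y = side t := by
        intro y hyr hy ht
        by_contra hne
        have hyt : y < t := by
          rcases hyr.2.1 with rfl | h
          · exact absurd rfl hne
          · exact h.1
        exact (spec_a hside t i ht).1 y hyt hyr hne hy
      by_cases hxt : x = t
      · subst hxt; exact (key y hyr hy hx).symm
      by_cases hyt : y = t
      · subst hyt; exact key x hxr hx hy
      have hxlt : x < t := by
        rcases hxr.2.1 with h | h
        · exact absurd h hxt
        · exact h.1
      have hylt : y < t := by
        rcases hyr.2.1 with h | h
        · exact absurd h hyt
        · exact h.1
      by_contra hne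
      refine not_mixed G t i hti ⟨x, ?_, y, ?_, ?_, ?_, ?_⟩
      · simpa [comp, dom_aux] using hxr
      · simpa [comp, dom_aux] using hyr
      · rw [aux_eq G t x hxlt]; exact hx
      · rw [aux_eq G t y hylt]; exact hy
      · rw [dom_aux, even_iff hside h]; exact hne
    · refine ih x y (ri_mono ?_ h) hx hy
      rintro w ⟨h1, h2⟩
      refine ⟨?_, h2⟩
      by_contra hw
      have : w = t := by omega
      subst this; omega

lemma children {G : SimpleGraph ℕ} {side : ℕ → Bool}
    (hside : ∀ x y, G.Adj x y → side x ≠ side y) (T u j : ℕ) (hj : 2 ≤ j) (huT : u ≤ T)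
    (hu : (algoCol G u).index = j) :
    ∃ x y, x < u ∧ y < u ∧ algoCol G x = PalColor.a (j-1) ∧ algoCol G y = PalColor.a (j-1) ∧
      side x = side u ∧ side y ≠ side u ∧
      (∃ f, G.Adj u f ∧ ReachIn G (Dm G T (j-1)) f x) ∧
      (∃ f, G.Adj u f ∧ ReachIn G (Dm G T (j-1)) f y) ∧
      ¬ ReachIn G (Dm G T (j-1)) x y := by
  have key : ∃ x y, x < u ∧ y < u ∧ algoCol G x = PalColor.a (j-1) ∧
      algoCol G y = PalColor.a (j-1) ∧
      side x = side u ∧ side y ≠ side u ∧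
      (∃ f, G.Adj u f ∧ ReachIn G (Dm G T (j-1)) f x) ∧
      (∃ f, G.Adj u f ∧ ReachIn G (Dm G T (j-1)) f y) := by
    obtain ⟨x, hx, y, hy, hcx, hcy, hE⟩ := is_mixed G u j hj hu
    have hxu : x < u := by
      by_contra hxt
      rw [aux_self G u x (by omega)] at hcx
      injection hcx; omega
    have hyu : y < u := by
      by_contra hxt
      rw [aux_self G u y (by omega)] at hcy
      injection hcy; omega
    rw [aux_eq G u x hxu] at hcx
    rw [aux_eq G u y hyu] at hcy
    simp only [comp, dom_aux, Set.mem_ofPred_eq] at hx hy hE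
    rw [even_iff hside (ri_trans (ri_symm hx) hy)] at hE
    have hf : ∀ z, z < u → ReachIn G (insert u (Dm G u (j-1))) u z →
        (∃ f, G.Adj u f ∧ ReachIn G (Dm G T (j-1)) f z) := by
      intro z hz hr
      rcases ri_split hr with rfl | ⟨f, hf, huf, hfz⟩
      · omega
      · exact ⟨f, huf, ri_mono (Dm_mono G huT le_rfl) hfz⟩
    by_cases hs : side x = side u
    · exact ⟨x, y, hxu, hyu, hcx, hcy, hs, fun h => hE (hs.trans h.symm), hf x hxu hx, hf y hyu hy⟩
    · refine ⟨y, x, hyu, hxu, hcy, hcx, ?_, hs, hf y hyu hy, hf x hxu hx⟩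
      revert hs hE
      cases side x <;> cases side y <;> cases side u <;> simp
  obtain ⟨x, y, h1, h2, h3, h4, h5, h6, h7, h8⟩ := key
  refine ⟨x, y, h1, h2, h3, h4, h5, h6, h7, h8, ?_⟩
  intro h
  exact h6 ((nonmix hside _ _ x y h h3 h4).symm.trans h5)

def HasX (G : SimpleGraph ℕ) (side : ℕ → Bool) (i : ℕ) (S : Set ℕ) (r : Bool) : Prop :=
  ∃ e : XGraph i ↪g G, ∀ x, e x ∈ S ∧ side (e x) = (XSide i x == r)

lemma hasX_mono {G : SimpleGraph ℕ} {side : ℕ → Bool} {i : ℕ} {S T : Set ℕ} {r : Bool}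
    (hST : S ⊆ T) (h : HasX G side i S r) : HasX G side i T r := by
  obtain ⟨e, he⟩ := h
  exact ⟨e, fun x => ⟨hST (he x).1, (he x).2⟩⟩

lemma xside_root (i : ℕ) : XSide i (XRoot i) = true := by
  match i with
  | 0 => rfl
  | 1 => rfl
  | 2 => rfl
  | (n+3) => rfl

lemma xside_false (n : ℕ) : ∃ x, XSide (n+2) x = false := by
  induction n with
  | zero => exact ⟨false, rfl⟩
  | succ n ih =>
    obtain ⟨x, hx⟩ := ih
    exact ⟨some (Sum.inr x), hx⟩

lemma hasX_one {G : SimpleGraph ℕ} {side : ℕ → Bool} {S : Set ℕ} {u : ℕ} (hu : u ∈ S) :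
    HasX G side 1 S (side u) := by
  refine ⟨⟨⟨fun _ => u, fun a b _ => rfl⟩, ?_⟩, ?_⟩
  · intro a b
    have : a = b := rfl
    subst this
    simp
  · intro x
    refine ⟨hu, ?_⟩
    show side u = (true == side u)
    simp

lemma hasX_two {G : SimpleGraph ℕ} {side : ℕ → Bool}
    (hside : ∀ x y, G.Adj x y → side x ≠ side y) {S : Set ℕ} {u w : ℕ} (hu : u ∈ S) (hw : w ∈ S)
    (h : G.Adj u w) : HasX G side 2 S (side u) := by
  have hne := hside u w h
  have finj : Function.Injective (fun b : Bool => if b then u else w) := by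
    intro a b hab
    cases a <;> cases b <;> simp at hab ⊢
    · exact h.ne hab.symm
    · exact h.ne hab
  refine ⟨⟨⟨fun b : Bool => if b then u else w, finj⟩, ?_⟩, ?_⟩
  · intro a b
    change Bool at a b
    change G.Adj (if a then u else w) (if b then u else w) ↔ (a ≠ b ∧ (a ≠ b ∨ b ≠ a))
    cases a <;> cases b <;> simp [h, h.symm]
  · intro x
    change Bool at x
    change (if x then u else w) ∈ S ∧ side (if x then u else w) = (x == side u)
    cases x
    · refine ⟨hw, ?_⟩
      revert hne
      simp only [Bool.false_eq_true, if_false]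
      cases side u <;> cases side w <;> simp
    · exact ⟨hu, by simp⟩

lemma hasX_comb {G : SimpleGraph ℕ} {side : ℕ → Bool}
    (hside : ∀ x y, G.Adj x y → side x ≠ side y) {n : ℕ} {S1 S2 : Set ℕ} {p : ℕ}
    (h1 : HasX G side (n+2) S1 (!side p)) (h2 : HasX G side (n+2) S2 (side p))
    (hne : ∀ a ∈ S1, ∀ b ∈ S2, a ≠ b ∧ ¬ G.Adj a b)
    (hp1 : ∀ x ∈ S1, side x ≠ side p → G.Adj p x)
    (hp2 : ∀ x ∈ S2, side x ≠ side p → G.Adj p x) :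
    HasX G side (n+3) (insert p (S1 ∪ S2)) (side p) := by
  obtain ⟨e1, he1⟩ := h1
  obtain ⟨e2, he2⟩ := h2
  have a1 : ∀ x, G.Adj p (e1 x) ↔ XSide (n+2) x = true := by
    intro x
    have hs := (he1 x).2
    constructor
    · intro h
      have := hside _ _ h
      rw [hs] at this
      revert this
      cases XSide (n+2) x <;> cases side p <;> simp
    · intro h
      refine hp1 _ (he1 x).1 ?_
      rw [hs, h]
      cases side p <;> simp
  have a2 : ∀ x, G.Adj p (e2 x) ↔ XSide (n+2) x = false := by
    intro x
    have hs := (he2 x).2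
    constructor
    · intro h
      have := hside _ _ h
      rw [hs] at this
      revert this
      cases XSide (n+2) x <;> cases side p <;> simp
    · intro h
      refine hp2 _ (he2 x).1 ?_
      rw [hs, h]
      cases side p <;> simp
  have q1 : ∀ x, p ≠ e1 x := by
    rintro x hx
    obtain ⟨y, hy⟩ := xside_false n
    have := (a2 y).2 hy
    rw [hx] at this
    exact (hne _ (he1 x).1 _ (he2 y).1).2 this
  have q2 : ∀ x, p ≠ e2 x := by
    rintro x hx
    have := (a1 (XRoot (n+2))).2 (xside_root _)
    rw [hx] at this
    exact (hne _ (he1 (XRoot (n+2))).1 _ (he2 x).1).2 this.symm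
  have b1 : ∀ x y, G.Adj (e1 x) (e1 y) ↔ (x ≠ y ∧ (XRel (n+2) x y ∨ XRel (n+2) y x)) :=
    fun x y => e1.map_rel_iff
  have b2 : ∀ x y, G.Adj (e2 x) (e2 y) ↔ (x ≠ y ∧ (XRel (n+2) x y ∨ XRel (n+2) y x)) :=
    fun x y => e2.map_rel_iff
  let f : Option (XV (n+2) ⊕ XV (n+2)) → ℕ := fun z => match z with
    | none => p
    | some (Sum.inl x) => e1 x
    | some (Sum.inr x) => e2 x
  have finj : Function.Injective f := by
    intro a b hab
    rcases a with _ | (a | a) <;> rcases b with _ | (b | b)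
    · rfl
    · exact absurd hab (q1 b)
    · exact absurd hab (q2 b)
    · exact absurd hab.symm (q1 a)
    · rw [e1.injective hab]
    · exact absurd hab (hne _ (he1 a).1 _ (he2 b).1).1
    · exact absurd hab.symm (q2 a)
    · exact absurd hab.symm (hne _ (he1 b).1 _ (he2 a).1).1
    · rw [e2.injective hab]
  refine ⟨⟨⟨f, finj⟩, ?_⟩, ?_⟩
  · intro a b
    change Option (XV (n+2) ⊕ XV (n+2)) at a b
    change G.Adj (f a) (f b) ↔ (a ≠ b ∧ (XRel (n+3) a b ∨ XRel (n+3) b a))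
    rcases a with _ | (a | a) <;> rcases b with _ | (b | b)
    · simp
    · simp [f, XRel, a1]
    · simp [f, XRel, a2]
    · simp [f, XRel, a1, G.adj_comm _ p]
    · simp [f, XRel, b1]
    · simp [f, XRel, (hne _ (he1 a).1 _ (he2 b).1).2]
    · simp [f, XRel, a2, G.adj_comm _ p]
    · simp [f, XRel, G.adj_comm (e2 a), (hne _ (he1 b).1 _ (he2 a).1).2]
    · simp [f, XRel, b2]
  · intro a
    change Option (XV (n+2) ⊕ XV (n+2)) at a
    change f a ∈ _ ∧ side (f a) = (XSide (n+3) a == side p)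
    rcases a with _ | (a | a)
    · exact ⟨Or.inl rfl, by simp [f, XSide]⟩
    · refine ⟨Or.inr (Or.inl (he1 a).1), ?_⟩
      simp only [f, XSide, (he1 a).2]
      cases XSide (n+2) a <;> cases side p <;> rfl
    · refine ⟨Or.inr (Or.inr (he2 a).1), ?_⟩
      simp only [f, XSide, (he2 a).2]

/-! induced paths -/

def Good (G : SimpleGraph ℕ) (u : ℕ) (E : Set ℕ) : Prop :=
  ∀ e1 ∈ E, ∀ e2 ∈ E, ∀ e3 ∈ E, ∀ e4 ∈ E, G.Adj u e1 → G.Adj e1 e2 → G.Adj e2 e3 → G.Adj e3 e4 →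
    G.Adj u e3 ∨ G.Adj e1 e4

lemma good_mono {G : SimpleGraph ℕ} {u : ℕ} {E E' : Set ℕ} (h : E' ⊆ E) (hg : Good G u E) :
    Good G u E' :=
  fun a ha b hb c hc d hd => hg a (h ha) b (h hb) c (h hc) d (h hd)

lemma good_or {G : SimpleGraph ℕ} {side : ℕ → Bool} (hP9 : PFree G 9)
    (hside : ∀ x y, G.Adj x y → side x ≠ side y) (u : ℕ) (E1 E2 : Set ℕ)
    (hne : ∀ a ∈ E1, ∀ b ∈ E2, a ≠ b ∧ ¬ G.Adj a b) : Good G u E1 ∨ Good G u E2 := by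
  by_contra hcon
  rw [not_or] at hcon
  obtain ⟨g1, g2⟩ := hcon
  simp only [Good, not_forall, not_or] at g1 g2
  obtain ⟨a1, A1, a2, A2, a3, A3, a4, A4, u1, u2, u3, u4, u5, u6⟩ := g1
  obtain ⟨b1, B1, b2, B2, b3, B3, b4, B4, v1, v2, v3, v4, v5, v6⟩ := g2
  have sy : ∀ x y, G.Adj x y ↔ G.Adj y x := fun x y => G.adj_comm x y
  have par : ∀ x y, side x = side y → ¬ G.Adj x y := fun x y h h' => hside x y h' h
  have flip : ∀ x y, G.Adj x y → side y = !side x := by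
    intro x y h
    have := hside x y h
    revert this
    cases side x <;> cases side y <;> simp
  have sa1 := flip _ _ u1
  have sa2 : side a2 = side u := by rw [flip _ _ u2, sa1]; simp
  have sa3 : side a3 = !side u := by rw [flip _ _ u3, sa2]
  have sa4 : side a4 = side u := by rw [flip _ _ u4, sa3]; simp
  have sb1 := flip _ _ v1
  have sb2 : side b2 = side u := by rw [flip _ _ v2, sb1]; simp
  have sb3 : side b3 = !side u := by rw [flip _ _ v3, sb2]
  have sb4 : side b4 = side u := by rw [flip _ _ v4, sb3]; simp
  have adj : ∀ i j : Fin 9, i < j → (G.Adj (![a4,a3,a2,a1,u,b1,b2,b3,b4] i)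
      (![a4,a3,a2,a1,u,b1,b2,b3,b4] j) ↔ i.val + 1 = j.val) := by
    intro i j hij
    have n1 : ∀ a ∈ E1, ∀ b ∈ E2, ¬ G.Adj a b := fun a ha b hb => (hne a ha b hb).2
    fin_cases i <;> fin_cases j <;> first
      | (exfalso; revert hij; decide)
      | (simp; first | assumption | exact G.symm (by assumption) | (apply par; simp [*]; done) |
          (apply n1 <;> assumption) | (rw [sy]; assumption))
  have inj : ∀ i j : Fin 9, i < j → ![a4,a3,a2,a1,u,b1,b2,b3,b4] i ≠
      ![a4,a3,a2,a1,u,b1,b2,b3,b4] j := by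
    intro i j hij
    have n1 : ∀ a ∈ E1, ∀ b ∈ E2, a ≠ b := fun a ha b hb => (hne a ha b hb).1
    have ns : ∀ x y, side x ≠ side y → x ≠ y := fun x y h h' => h (by rw [h'])
    have nt : ∀ x y z, G.Adj x z → ¬ G.Adj y z → x ≠ y := fun x y z h h' h'' => h' (h'' ▸ h)
    have nt' : ∀ x y z, ¬ G.Adj x z → G.Adj y z → x ≠ y := fun x y z h h' h'' => h (h'' ▸ h')
    fin_cases i <;> fin_cases j <;> first
      | (exfalso; revert hij; decide)
      | (simp; first | (apply n1 <;> assumption) | (apply ns; simp [*]; done) |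
          (apply nt _ _ a3 u4.symm; assumption) |
          (apply nt _ _ a1 u2.symm; rw [sy]; assumption) |
          (apply nt' _ _ u (by rw [sy]; assumption) u1.symm) |
          (apply nt' _ _ a1 (by rw [sy]; assumption) u2.symm) |
          (apply nt _ _ a3 u3; assumption) |
          (apply nt _ _ u v1.symm; rw [sy]; assumption) |
          (apply nt' _ _ b3 v5 v3) | (apply nt' _ _ b3 v5 v4.symm) |
          (apply nt _ _ b1 v2.symm; rw [sy]; assumption))
  refine hP9 ⟨![a4,a3,a2,a1,u,b1,b2,b3,b4], ?_, ?_⟩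
  · intro i j hij
    rcases lt_trichotomy i j with h | h | h
    · exact absurd hij (inj i j h)
    · exact h
    · exact absurd hij.symm (inj j i h)
  · intro i j
    rcases lt_trichotomy i j with h | h | h
    · rw [adj i j h]
      have : i.val < j.val := h
      omega
    · subst h; simp
    · rw [sy, adj j i h]
      have : j.val < i.val := h
      omega

lemma good_dist {G : SimpleGraph ℕ} {side : ℕ → Bool}
    (hside : ∀ x y, G.Adj x y → side x ≠ side y) {u f e : ℕ} {D : Set ℕ}
    (hg : Good G u {y | ReachIn G D f y}) (huf : G.Adj u f) (h : ReachIn G D f e)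
    (he : side e = side u) : ∃ p, ReachIn G D f p ∧ G.Adj u p ∧ G.Adj p e := by
  have key : (side e = side u → ∃ p, ReachIn G D f p ∧ G.Adj u p ∧ G.Adj p e) ∧
      (side e ≠ side u → G.Adj u e ∨ ∃ p q, ReachIn G D f p ∧ ReachIn G D f q ∧ G.Adj u p ∧
        G.Adj p q ∧ G.Adj q e) := by
    refine ri_ind (P := fun e => (side e = side u → ∃ p, ReachIn G D f p ∧ G.Adj u p ∧ G.Adj p e) ∧
      (side e ≠ side u → G.Adj u e ∨ ∃ p q, ReachIn G D f p ∧ ReachIn G D f q ∧ G.Adj u p ∧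
        G.Adj p q ∧ G.Adj q e)) h ⟨fun h => absurd h.symm (hside _ _ huf), fun _ => Or.inl huf⟩ ?_
    intro a b ha hb hab ⟨P1, P2⟩
    have hfb := ri_trans ha (ri_adj (ri_mem_right ha) hb hab)
    constructor
    · intro hs
      have hsa : side a ≠ side u := by rw [← hs]; exact hside _ _ hab
      rcases P2 hsa with h1 | ⟨p, q, hp, hq, hup, hpq, hqa⟩
      · exact ⟨a, ha, h1, hab⟩
      · rcases hg p hp q hq a ha b hfb hup hpq hqa hab with h2 | h2
        · exact ⟨a, ha, h2, hab⟩
        · exact ⟨p, hp, hup, h2⟩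
    · intro hs
      have hsa : side a = side u := by
        have := hside _ _ hab
        revert this hs
        cases side a <;> cases side b <;> cases side u <;> simp
      obtain ⟨p, hp, hup, hpa⟩ := P1 hsa
      exact Or.inr ⟨p, a, hp, ha, hup, hpa, hab⟩
  exact key.1 he

lemma triple {G : SimpleGraph ℕ} {side : ℕ → Bool}
    (hside : ∀ x y, G.Adj x y → side x ≠ side y) {P : ℕ → Prop} {S : Set ℕ} {c z : ℕ} (b : Bool)
    (h : ReachIn G S c z) (hc : side c = b) (hz : side z = b) (hPc : P c) (hPz : ¬ P z) :
    ∃ z1 z2 z3, ReachIn G S c z1 ∧ ReachIn G S c z2 ∧ ReachIn G S c z3 ∧ G.Adj z1 z2 ∧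
      G.Adj z2 z3 ∧ P z1 ∧ ¬ P z3 ∧ side z1 = b ∧ side z3 = b := by
  by_contra hcon
  have key : (side z = b → P z) ∧ (side z ≠ b → ∃ y, ReachIn G S c y ∧ G.Adj y z ∧ P y ∧
      side y = b) := by
    refine ri_ind (P := fun z => (side z = b → P z) ∧ (side z ≠ b → ∃ y, ReachIn G S c y ∧
      G.Adj y z ∧ P y ∧ side y = b)) h ⟨fun _ => hPc, fun h => absurd hc h⟩ ?_
    intro x y hx hy hxy ⟨P1, P2⟩
    have hcy := ri_trans hx (ri_adj (ri_mem_right hx) hy hxy)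
    constructor
    · intro hs
      have hsx : side x ≠ b := by rw [← hs]; exact hside _ _ hxy
      obtain ⟨w, hw, hwx, hPw, hsw⟩ := P2 hsx
      by_contra hPy
      exact hcon ⟨w, x, y, hw, hx, hcy, hwx, hxy, hPw, hPy, hsw, hs⟩
    · intro hs
      have hsx : side x = b := by
        have := hside _ _ hxy
        revert this hs
        cases side x <;> cases side y <;> cases b <;> simp
      exact ⟨x, hx, hxy, P1 hsx, hsx⟩
  exact hPz (key.1 hz)

lemma bool_flip {a b c : Bool} (h : a ≠ b) (h' : c ≠ b) : a = c := by
  revert h h'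
  cases a <;> cases b <;> cases c <;> simp

/-- The inductive statement. -/
def Main (G : SimpleGraph ℕ) (side : ℕ → Bool) (k : ℕ) : Prop :=
  ∀ v s : ℕ, 1 ≤ s → 2 * s ^ 2 ≤ k → algoCol G v = PalColor.a k →
    HasX G side s {y | ReachIn G (insert v (Dm G v k)) v y} (side v)

lemma lemU {G : SimpleGraph ℕ} {side : ℕ → Bool}
    (hside : ∀ x y, G.Adj x y → side x ≠ side y) {T j u p n : ℕ} (hu : u < T)
    (hj : 2 * (n+2) ^ 2 ≤ j - 1)
    (hcu : hasColorIndex (algoCol G) u j) (hU : UnivTo G (algoCol G) T j u p)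
    (hM : Main G side (j-1)) :
    HasX G side (n+3) (insert p {y | ReachIn G (insert u (Dm G T (j-1))) u y}) (side p) := by
  have hidx : (algoCol G u).index = j := by rcases hcu with h | h <;> rw [h] <;> rfl
  have hj2 : 2 ≤ j := by
    have : 1 ≤ (n+2) ^ 2 := Nat.one_le_pow _ _ (by omega)
    omega
  obtain ⟨x, y, hxu, hyu, hcx, hcy, hsx, hsy, ⟨fx, hfx, hrx⟩, ⟨fy, hfy, hry⟩, hnr⟩ :=
    children hside T u j hj2 hu.le hidx
  rw [univ_iff hside] at hU
  obtain ⟨b, hb⟩ := hU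
  have sub : Dm G T (j-1) ⊆ insert u (Dm G T (j-1)) := Set.subset_insert _ _
  have conn : ∀ f z w, G.Adj u f → ReachIn G (Dm G T (j-1)) f z → ReachIn G (Dm G T (j-1)) z w →
      ReachIn G (insert u (Dm G T (j-1))) u w := by
    intro f z w h1 h2 h3
    exact ri_trans (ri_adj (by simp) (sub h2.1) h1) (ri_mono sub (ri_trans h2 h3))
  have hX : ∀ z, z < u → algoCol G z = PalColor.a (j-1) →
      HasX G side (n+2) {w | ReachIn G (Dm G T (j-1)) z w} (side z) := by
    intro z hz hc
    refine hasX_mono ?_ (hM z (n+2) (by omega) hj hc)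
    intro w hw
    refine ri_mono ?_ hw
    rintro q (rfl | hq)
    · exact ⟨by omega, by rw [hc]; show 1 ≤ j-1; omega, by rw [hc]; exact le_rfl⟩
    · exact Dm_mono G (by omega) le_rfl hq
  have key : ∀ x y, HasX G side (n+2) {w | ReachIn G (Dm G T (j-1)) x w} (side x) →
      HasX G side (n+2) {w | ReachIn G (Dm G T (j-1)) y w} (side y) →
      side x ≠ side p → side y = side p → ¬ ReachIn G (Dm G T (j-1)) x y →
      (∀ w, ReachIn G (Dm G T (j-1)) x w → ReachIn G (insert u (Dm G T (j-1))) u w) →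
      (∀ w, ReachIn G (Dm G T (j-1)) y w → ReachIn G (insert u (Dm G T (j-1))) u w) →
      b ≠ side p →
      HasX G side (n+3) (insert p {y | ReachIn G (insert u (Dm G T (j-1))) u y}) (side p) := by
    intro x y hx hy hsx hsy hnr hcx hcy hbp
    have e1 : side x = !side p := by
      revert hsx; cases side x <;> cases side p <;> simp
    rw [e1] at hx
    rw [hsy] at hy
    refine hasX_mono ?_ (hasX_comb hside hx hy ?_ ?_ ?_)
    · apply Set.insert_subset_insert
      rintro w (hw | hw)
      · exact hcx w hw
      · exact hcy w hw
    · intro a ha c hc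
      constructor
      · rintro rfl
        exact hnr (ri_trans ha (ri_symm hc))
      · intro hac
        exact hnr (ri_trans ha (ri_trans (ri_adj (ri_mem_right ha) (ri_mem_right hc) hac)
          (ri_symm hc)))
    · intro w hw hs
      exact hb w (hcx w hw) (bool_flip hs hbp)
    · intro w hw hs
      exact hb w (hcy w hw) (bool_flip hs hbp)
  have hbp : b ≠ side p := by
    by_cases hbu : side u = b
    · have := hside _ _ (hb u (ri_refl (by simp)) hbu)
      rw [hbu] at this
      exact this.symm
    · have hsy' : side y = b := bool_flip hsy (fun h => hbu h.symm)
      have := hside _ _ (hb y (conn fy y y hfy hry (ri_refl (ri_mem_right hry))) hsy')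
      rw [hsy'] at this
      exact this.symm
  have cx := fun w => conn fx x w hfx hrx
  have cy := fun w => conn fy y w hfy hry
  by_cases hup : side u = side p
  · exact key y x (hX y hyu hcy) (hX x hxu hcx) (by rw [← hup]; exact hsy) (by rw [hsx, hup])
      (fun h => hnr (ri_symm h)) cy cx hbp
  · exact key x y (hX x hxu hcx) (hX y hyu hcy) (by rw [hsx]; exact hup)
      (bool_flip hsy (fun h => hup h.symm)) hnr cx cy hbp

/-- Claim A. -/
lemma claimA {G : SimpleGraph ℕ} {side : ℕ → Bool}
    (hside : ∀ x y, G.Adj x y → side x ≠ side y) {T u f w h i : ℕ}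
    (hg : Good G u {y | ReachIn G (Dm G T i) f y}) (huf : G.Adj u f)
    (hw : ReachIn G (Dm G T i) f w) (hwh : (algoCol G w).index = h) (hh : 2 ≤ h)
    (hnu : ∀ p, ReachIn G (Dm G T i) f p → ¬ UnivTo G (algoCol G) T h w p) :
    ∃ q, ReachIn G (insert w (Dm G T (h-1))) w q ∧ G.Adj u q := by
  by_contra hcon
  have hwD := ri_mem_right hw
  have hhi : h ≤ i := by rw [← hwh]; exact hwD.2.2
  have sub : insert w (Dm G T (h-1)) ⊆ Dm G T i := by
    rintro z (rfl | hz)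
    · exact hwD
    · exact Dm_mono G le_rfl (by omega) hz
  have hC : ∀ q, ReachIn G (insert w (Dm G T (h-1))) w q → ReachIn G (Dm G T i) f q :=
    fun q hq => ri_trans hw (ri_mono sub hq)
  obtain ⟨x, y, -, -, -, -, hsx, hsy, -, ⟨fy, hfy, hry⟩, -⟩ :=
    children hside T w h hh hwD.1.le hwh
  have hwfy : ReachIn G (insert w (Dm G T (h-1))) w fy :=
    ri_adj (by simp) (Or.inr hry.1) hfy
  have hc : ∃ c, ReachIn G (insert w (Dm G T (h-1))) w c ∧ side c = side u := by
    by_cases hs : side w = side u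
    · exact ⟨w, ri_refl (by simp), hs⟩
    · exact ⟨fy, hwfy, bool_flip (hside _ _ hfy).symm (fun h => hs h.symm)⟩
  obtain ⟨c, hc, hsc⟩ := hc
  obtain ⟨p, hp, hup, hpc⟩ := good_dist hside hg huf (hC c hc) hsc
  have hnp := hnu p hp
  rw [univ_iff hside] at hnp
  simp only [not_exists, not_forall] at hnp
  obtain ⟨z, hz, hsz, hpz⟩ := hnp (side u)
  obtain ⟨z1, z2, z3, r1, r2, r3, a12, a23, P1, P3, -, -⟩ :=
    triple hside (P := fun z => G.Adj p z) (side u) (ri_trans (ri_symm hc) hz) hsc hsz hpc hpz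
  rcases hg p hp z1 (hC _ (ri_trans hc r1)) z2 (hC _ (ri_trans hc r2)) z3 (hC _ (ri_trans hc r3))
    hup P1 a12 a23 with h' | h'
  · exact hcon ⟨z2, ri_trans hc r2, h'⟩
  · exact P3 h'

/-- Claim B. -/
lemma claimB {G : SimpleGraph ℕ} {side : ℕ → Bool}
    (hside : ∀ x y, G.Adj x y → side x ≠ side y) {T u f w h i : ℕ}
    (hg : Good G u {y | ReachIn G (Dm G T i) f y}) (huf : G.Adj u f)
    (hw : ReachIn G (Dm G T i) f w) (hwh : (algoCol G w).index = h) (hh : 2 ≤ h)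
    (hnu : ∀ p, ReachIn G (Dm G T i) f p → ¬ UnivTo G (algoCol G) T h w p)
    (hs : side w ≠ side u) : G.Adj u w := by
  by_contra hcon
  obtain ⟨q, hq, huq⟩ := claimA hside hg huf hw hwh hh hnu
  have hwD := ri_mem_right hw
  have hhi : h ≤ i := by rw [← hwh]; exact hwD.2.2
  have sub0 : Dm G T (h-1) ⊆ Dm G T i := Dm_mono G le_rfl (by omega)
  rcases ri_split hq with rfl | ⟨g, hg0, hwg, hgq⟩
  · exact hcon huq
  have hgE : ∀ z, ReachIn G (Dm G T (h-1)) g z → ReachIn G (Dm G T i) f z := by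
    intro z hz
    exact ri_trans hw (ri_trans (ri_adj hwD (sub0 hg0) hwg) (ri_mono sub0 hz))
  have hsg : side g = side u := bool_flip (hside _ _ hwg).symm hs.symm
  have hg' : Good G u {y | ReachIn G (Dm G T (h-1)) q y} :=
    good_mono (fun z hz => hgE z (ri_trans hgq hz)) hg
  obtain ⟨p, hp, hup, hpg⟩ := good_dist hside hg' huq (ri_symm hgq) hsg
  have hgp := ri_trans hgq hp
  obtain ⟨x, y, -, -, -, -, -, -, ⟨fx, hfx, hrx⟩, ⟨fy, hfy, hry⟩, hnr⟩ :=
    children hside T w h hh hwD.1.le hwh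
  have hg2 : ∃ g', G.Adj w g' ∧ g' ∈ Dm G T (h-1) ∧ ¬ ReachIn G (Dm G T (h-1)) g g' := by
    by_cases h1 : ReachIn G (Dm G T (h-1)) g fx
    · refine ⟨fy, hfy, hry.1, fun h2 => hnr ?_⟩
      exact ri_trans (ri_symm (ri_trans h1 hrx)) (ri_trans h2 hry)
    · exact ⟨fx, hfx, hrx.1, h1⟩
  obtain ⟨g', hwg', hgD', hng⟩ := hg2
  have hg'E : ReachIn G (Dm G T i) f g' := ri_trans hw (ri_adj hwD (sub0 hgD') hwg')
  rcases hg p (hgE p hgp) g (hgE g (ri_refl hg0)) w hw g' hg'E hup hpg hwg.symm hwg' with h' | h'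
  · exact hcon h'
  · exact hng (ri_trans hgp (ri_adj (ri_mem_right hgp) hgD' h'))

lemma lemR {G : SimpleGraph ℕ} {side : ℕ → Bool} (hP9 : PFree G 9)
    (hside : ∀ x y, G.Adj x y → side x ≠ side y) {v k L : ℕ} (hL : 2 ≤ L)
    (hvk : (algoCol G v).index = k)
    (hnu : ∀ u < v, ReachIn G (insert v (Dm G v k)) v u → ∀ p,
      ReachIn G (insert v (Dm G v k)) v p → ∀ j : ℕ, hasColorIndex (algoCol G) u j → L ≤ j →
      ¬ UnivTo G (algoCol G) v j u p) (i : ℕ) : ∀ u j : ℕ, u ≤ v → 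
      ReachIn G (insert v (Dm G v k)) v u → hasColorIndex (algoCol G) u j → L + 2 * i ≤ j →
      HasX G side (i+1) {y | ReachIn G (insert u (Dm G v (j-1))) u y ∧
        ∃ h, L ≤ h ∧ hasColorIndex (algoCol G) y h} (side u) := by
  induction i with
  | zero =>
    intro u j huv hu hc hj
    exact hasX_one ⟨ri_refl (by simp), j, by omega, hc⟩
  | succ i ih =>
    intro u j huv hu hc hj
    have hidx : ∀ {u j}, hasColorIndex (algoCol G) u j → (algoCol G u).index = j := by
      intro u j hcu
      rcases hcu with h | h <;> rw [h] <;> rfl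
    obtain ⟨x, y, hxu, hyu, hcx, hcy, hsx, hsy, hfx, hfy, hnr⟩ :=
      children hside v u j (by omega) huv (hidx hc)
    have hjk : j ≤ k := by
      rcases ri_mem_right hu with h | h
      · rw [h, ] at hc
        rw [← hvk, hidx hc]
      · rw [← hidx hc]; exact h.2.2
    have ex : ∃ z f, z < u ∧ algoCol G z = PalColor.a (j-1) ∧ G.Adj u f ∧
        ReachIn G (Dm G v (j-1)) f z ∧ Good G u {y | ReachIn G (Dm G v (j-1)) f y} := by
      obtain ⟨fx, hfx, hrx⟩ := hfx
      obtain ⟨fy, hfy, hry⟩ := hfy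
      have := good_or hP9 hside u {y | ReachIn G (Dm G v (j-1)) fx y}
        {y | ReachIn G (Dm G v (j-1)) fy y} (by
          have hn : ¬ ReachIn G (Dm G v (j-1)) fx fy := fun h =>
            hnr (ri_trans (ri_symm hrx) (ri_trans h hry))
          intro a ha c hc
          constructor
          · rintro rfl
            exact hn (ri_trans ha (ri_symm hc))
          · intro hac
            exact hn (ri_trans ha (ri_trans (ri_adj (ri_mem_right ha) (ri_mem_right hc) hac)
              (ri_symm hc))))
      rcases this with h | h
      · exact ⟨x, fx, hxu, hcx, hfx, hrx, h⟩
      · exact ⟨y, fy, hyu, hcy, hfy, hry, h⟩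
    obtain ⟨z, f, hzu, hcz, huf, hfz, hg⟩ := ex
    obtain ⟨x', y', hxz, hyz, hcx', hcy', hsx', hsy', ⟨fx', hfx', hrx'⟩, ⟨fy', hfy', hry'⟩, hnr'⟩ :=
      children hside v z (j-1) (by omega) (by omega) (by rw [hcz]; rfl)
    have e2 : j - 1 - 1 = j - 2 := by omega
    rw [e2] at hcx' hcy' hrx' hry' hnr'
    have sub1 : Dm G v (j-2) ⊆ Dm G v (j-1) := Dm_mono G le_rfl (by omega)
    have sub2 : Dm G v (j-1) ⊆ Dm G v k := Dm_mono G le_rfl (by omega)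
    have sub3 : Dm G v (j-1) ⊆ insert u (Dm G v (j-1)) := Set.subset_insert _ _
    have sub4 : Dm G v k ⊆ insert v (Dm G v k) := Set.subset_insert _ _
    have hE1 : ∀ q, ReachIn G (Dm G v (j-1)) f q → ReachIn G (insert u (Dm G v (j-1))) u q :=
      fun q hq => ri_trans (ri_adj (by simp) (sub3 hq.1) huf) (ri_mono sub3 hq)
    have hE2 : ∀ q, ReachIn G (Dm G v (j-1)) f q → ReachIn G (insert v (Dm G v k)) v q :=
      fun q hq => ri_trans hu (ri_trans (ri_adj (ri_mem_right hu) (sub4 (sub2 hq.1)) huf)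
        (ri_mono (sub2.trans sub4) hq))
    have hadj : ∀ w h, ReachIn G (Dm G v (j-1)) f w → L ≤ h → hasColorIndex (algoCol G) w h →
        side w ≠ side u → G.Adj u w := by
      intro w h hw hh hcw hs
      refine claimB hside hg huf hw (hidx hcw) (by omega) ?_ hs
      intro p hp
      exact hnu w (ri_mem_right hw).1 (hE2 w hw) p (hE2 p hp) h hcw hh
    have hx'E : ∀ q, ReachIn G (Dm G v (j-2)) x' q → ReachIn G (Dm G v (j-1)) f q := fun q hq =>
      ri_trans hfz (ri_trans (ri_adj (ri_mem_right hfz) (sub1 hrx'.1) hfx')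
        (ri_mono sub1 (ri_trans hrx' hq)))
    have hy'E : ∀ q, ReachIn G (Dm G v (j-2)) y' q → ReachIn G (Dm G v (j-1)) f q := fun q hq =>
      ri_trans hfz (ri_trans (ri_adj (ri_mem_right hfz) (sub1 hry'.1) hfy')
        (ri_mono sub1 (ri_trans hry' hq)))
    -- reorder so that `s` is on the side of `u`
    have ex2 : ∃ a b, a < v ∧ b < v ∧ algoCol G a = PalColor.a (j-2) ∧
        algoCol G b = PalColor.a (j-2) ∧ side a ≠ side u ∧ side b = side u ∧
        a ∈ Dm G v (j-2) ∧ b ∈ Dm G v (j-2) ∧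
        (∀ q, ReachIn G (Dm G v (j-2)) a q → ReachIn G (Dm G v (j-1)) f q) ∧
        (∀ q, ReachIn G (Dm G v (j-2)) b q → ReachIn G (Dm G v (j-1)) f q) ∧
        ¬ ReachIn G (Dm G v (j-2)) a b := by
      by_cases hzs : side z = side u
      · exact ⟨y', x', by omega, by omega, hcy', hcx', by rw [← hzs]; exact hsy', by rw [hsx', hzs],
          ri_mem_right hry', ri_mem_right hrx', hy'E, hx'E, fun h => hnr' (ri_symm h)⟩
      · exact ⟨x', y', by omega, by omega, hcx', hcy', by rw [hsx']; exact hzs,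
          bool_flip hsy' (fun h => hzs h.symm),
          ri_mem_right hrx', ri_mem_right hry', hx'E, hy'E, hnr'⟩
    obtain ⟨a, b, hav, hbv, hca, hcb, hsa, hsb, haD, hbD, haE, hbE, hab⟩ := ex2
    rcases Nat.eq_zero_or_pos i with hi | hi
    · subst hi
      have hua := hadj a (j-2) (haE a (ri_refl haD)) (by omega) (Or.inl hca) hsa
      refine hasX_two hside (w := a) ⟨ri_refl (by simp), j, by omega, hc⟩
        ⟨hE1 a (haE a (ri_refl haD)), j-2, by omega, Or.inl hca⟩ hua
    · obtain ⟨n, rfl⟩ : ∃ n, i = n + 1 := ⟨i - 1, by omega⟩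
      have hX : ∀ a, a < v → algoCol G a = PalColor.a (j-2) → a ∈ Dm G v (j-2) →
          (∀ q, ReachIn G (Dm G v (j-2)) a q → ReachIn G (Dm G v (j-1)) f q) →
          HasX G side (n+2) {y | ReachIn G (Dm G v (j-2)) a y ∧
            ∃ h, L ≤ h ∧ hasColorIndex (algoCol G) y h} (side a) := by
        intro a hav hca haD haE
        refine hasX_mono ?_ (ih a (j-2) hav.le (hE2 a (haE a (ri_refl haD))) (Or.inl hca) (by omega))
        rintro w ⟨hw, hh⟩
        refine ⟨ri_mono ?_ hw, hh⟩
        rintro q (rfl | hq)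
        · exact haD
        · exact Dm_mono G le_rfl (by omega) hq
      have ha := hX a hav hca haD haE
      have hb := hX b hbv hcb hbD hbE
      have e1 : side a = !side u := by
        revert hsa; cases side a <;> cases side u <;> simp
      rw [e1] at ha
      rw [hsb] at hb
      refine hasX_mono ?_ (hasX_comb hside ha hb ?_ ?_ ?_)
      · rintro w (rfl | ⟨hw, hh⟩ | ⟨hw, hh⟩)
        · exact ⟨ri_refl (by simp), j, by omega, hc⟩
        · exact ⟨hE1 _ (haE _ hw), hh⟩
        · exact ⟨hE1 _ (hbE _ hw), hh⟩
      · rintro c ⟨hc, -⟩ d ⟨hd, -⟩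
        constructor
        · rintro rfl
          exact hab (ri_trans hc (ri_symm hd))
        · intro hcd
          exact hab (ri_trans hc (ri_trans (ri_adj (ri_mem_right hc) (ri_mem_right hd) hcd)
            (ri_symm hd)))
      · rintro w ⟨hw, h, hh, hcw⟩ hs
        exact hadj w h (haE w hw) hh hcw hs
      · rintro w ⟨hw, h, hh, hcw⟩ hs
        exact hadj w h (hbE w hw) hh hcw hs

lemma real_bound {k s j : ℕ} (hs : 1 ≤ s) (hk : 2 * s ^ 2 ≤ k)
    (h : (k : ℝ) - Real.sqrt (2 * k) + 2 ≤ (j : ℝ)) : 2 * s ^ 2 + 2 ≤ j + 2 * s := by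
  have hk' : (2 * s ^ 2 : ℝ) ≤ k := by exact_mod_cast hk
  have hs' : (1 : ℝ) ≤ s := by exact_mod_cast hs
  have h0 : 0 ≤ Real.sqrt (2 * k) := Real.sqrt_nonneg _
  have hsq : Real.sqrt (2 * k) ^ 2 = 2 * k := Real.sq_sqrt (by positivity)
  have hr : 2 * (s : ℝ) ≤ Real.sqrt (2 * k) := by
    apply Real.le_sqrt_of_sq_le
    nlinarith
  have : (2 * s ^ 2 + 2 : ℝ) ≤ j + 2 * s := by nlinarith
  exact_mod_cast this

lemma real_bound2 {k s j : ℕ} (hk : 2 * s ^ 2 ≤ k) (h : k + 2 ≤ j + 2 * s) :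
    (k : ℝ) - Real.sqrt (2 * k) + 2 ≤ (j : ℝ) := by
  have hk' : (2 * s ^ 2 : ℝ) ≤ k := by exact_mod_cast hk
  have hr : 2 * (s : ℝ) ≤ Real.sqrt (2 * k) := by
    apply Real.le_sqrt_of_sq_le
    nlinarith
  have : (k + 2 : ℝ) ≤ j + 2 * s := by exact_mod_cast h
  linarith

lemma main_all {G : SimpleGraph ℕ} {side : ℕ → Bool} (hP9 : PFree G 9)
    (hside : ∀ x y, G.Adj x y → side x ≠ side y) (k : ℕ) : Main G side k := by
  induction k using Nat.strong_induction_on with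
  | _ k IH =>
  intro v s hs hk hv
  have hvk : (algoCol G v).index = k := by rw [hv]; rfl
  have hk2 : 2 ≤ k := by nlinarith
  rcases Nat.lt_or_ge s 3 with hs3 | hs3
  · rcases (by omega : s = 1 ∨ s = 2) with rfl | rfl
    · exact hasX_one (ri_refl (by simp))
    · obtain ⟨x, y, -, -, -, -, -, -, ⟨f, hf, hr⟩, -, -⟩ := children hside v v k hk2 le_rfl hvk
      have hfm : f ∈ insert v (Dm G v k) := Or.inr (Dm_mono G le_rfl (by omega) hr.1)
      exact hasX_two hside (w := f) (ri_refl (by simp)) (ri_adj (by simp) hfm hf) hf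
  obtain ⟨n, rfl⟩ : ∃ n, s = n + 3 := ⟨s - 3, by omega⟩
  have hidx : ∀ {u j}, hasColorIndex (algoCol G) u j → (algoCol G u).index = j := by
    intro u j hcu
    rcases hcu with h | h <;> rw [h] <;> rfl
  -- using a universal vertex on the correct side
  have useU : ∀ T u p j, T ≤ v → u < T → insert T (Dm G T k) ⊆ insert v (Dm G v k) →
      ReachIn G (insert v (Dm G v k)) v u → ReachIn G (insert v (Dm G v k)) v p →
      side p = side v → hasColorIndex (algoCol G) u j →
      2 * (n+3) ^ 2 + 2 ≤ j + 2 * (n+3) → UnivTo G (algoCol G) T j u p →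
      HasX G side (n+3) {y | ReachIn G (insert v (Dm G v k)) v y} (side v) := by
    intro T u p j hT hu hTs hru hrp hsp hcu hj hU
    have hjk : j ≤ k := by
      have h1 := ri_mem_right hru
      rcases h1 with h1 | h1
      · omega
      · rw [← hidx hcu]; exact h1.2.2
    have hj' : 2 * (n+2) ^ 2 ≤ j - 1 := by
      have : 2 * (n+2) ^ 2 + 1 ≤ j := by nlinarith
      omega
    have hj1 : j - 1 < k := by omega
    rw [← hsp]
    refine hasX_mono ?_ (lemU hside hu hj' hcu hU (IH (j-1) hj1))
    rintro w (rfl | hw)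
    · exact hrp
    · refine ri_trans hru (ri_mono ?_ hw)
      rintro q (rfl | hq)
      · exact ri_mem_right hru
      · exact hTs (Or.inr (Dm_mono G le_rfl (by omega) hq))
  rcases (spec_a hside v k hv).2 with ⟨w, hwv, hwr, hws, hwc⟩ | hno
  · obtain ⟨u, hu, p, hp, hps, j, hj, hkj, hU⟩ := spec_c hside w k hwc
    have hb := real_bound hs hk hkj
    have hsub : insert w (Dm G w k) ⊆ insert v (Dm G v k) := by
      rintro q (rfl | hq)
      · exact ri_mem_right hwr
      · exact Or.inr (Dm_mono G hwv.le le_rfl hq)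
    rcases hj with ⟨huw, hcu⟩ | rfl
    · exact useU w u p j hwv.le huw hsub (ri_trans hwr (ri_mono hsub hu))
        (ri_trans hwr (ri_mono hsub hp)) (bool_flip hps hws.symm) hcu hb hU
    · exfalso; nlinarith
  · by_cases hex : ∃ u < v, ∃ p j, ReachIn G (insert v (Dm G v k)) v u ∧
        ReachIn G (insert v (Dm G v k)) v p ∧ side p = side v ∧ hasColorIndex (algoCol G) u j ∧
        2 * (n+3) ^ 2 + 2 ≤ j + 2 * (n+3) ∧ UnivTo G (algoCol G) v j u p
    · obtain ⟨u, hu, p, j, h1, h2, h3, h4, h5, h6⟩ := hex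
      exact useU v u p j le_rfl hu subset_rfl h1 h2 h3 h4 h5 h6
    · have hkn : 2 * (n+3) ≤ k := by nlinarith
      refine hasX_mono ?_ (lemR hP9 hside (L := k + 2 - 2 * (n+3)) (by omega) hvk ?_ (n+2) v k
        le_rfl (ri_refl (by simp)) (Or.inl hv) (by omega))
      · rintro w ⟨hw, -⟩
        exact ri_mono (Set.insert_subset_insert (Dm_mono G le_rfl (by omega))) hw
      · intro u hu hru p hrp j hcu hj hU
        by_cases hsp : side p = side v
        · exact hex ⟨u, hu, p, j, hru, hrp, hsp, hcu, by omega, hU⟩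
        · exact hno u hu hru p hrp hsp j hcu (real_bound2 hk (by omega)) hU

end aux

theorem stmt9 (G : SimpleGraph ℕ) (n : ℕ) (hfin : ∀ i j, G.Adj i j → i < n ∧ j < n)
    (hP9 : PFree G 9)
    (side : ℕ → Bool) (hside : ∀ x y, G.Adj x y → side x ≠ side y)
    (v k : ℕ) (hk : 2 ≤ k) (hv : algoCol G v = PalColor.a k) :
    ∃ e : XGraph (⌊Real.sqrt ((k : ℝ) / 2)⌋₊) ↪g G,
      (∀ x, e x ∈ comp G (algoCol G) v k v) ∧
      side (e (XRoot (⌊Real.sqrt ((k : ℝ) / 2)⌋₊))) = side v := by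
  have h0 : (0 : ℝ) ≤ (k : ℝ) / 2 := by positivity
  have hs1 : 1 ≤ ⌊Real.sqrt ((k : ℝ) / 2)⌋₊ := by
    rw [Nat.one_le_floor_iff]
    apply Real.le_sqrt_of_sq_le
    have : (2 : ℝ) ≤ k := by exact_mod_cast hk
    linarith
  have hs2 : 2 * ⌊Real.sqrt ((k : ℝ) / 2)⌋₊ ^ 2 ≤ k := by
    have h1 : (⌊Real.sqrt ((k : ℝ) / 2)⌋₊ : ℝ) ≤ Real.sqrt ((k : ℝ) / 2) :=
      Nat.floor_le (Real.sqrt_nonneg _)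
    have h2 : Real.sqrt ((k : ℝ) / 2) ^ 2 = (k : ℝ) / 2 := Real.sq_sqrt h0
    have h3 : (⌊Real.sqrt ((k : ℝ) / 2)⌋₊ : ℝ) ^ 2 ≤ Real.sqrt ((k : ℝ) / 2) ^ 2 :=
      pow_le_pow_left₀ (Nat.cast_nonneg _) h1 2
    have h4 : (2 * ⌊Real.sqrt ((k : ℝ) / 2)⌋₊ ^ 2 : ℝ) ≤ k := by linarith
    exact_mod_cast h4
  obtain ⟨e, he⟩ := main_all hP9 hside k v _ hs1 hs2 hv
  refine ⟨e, fun x => ?_, ?_⟩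
  · have := (he x).1
    simpa only [comp, dom_algo] using this
  · rw [(he _).2, xside_root]
    simp
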